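/- arXiv:2302.01425 — 8 statements merged into one kernel-verified Lean document; each statement's English description precedes it below -/
import Mathlib

section
/- Let n ≥ 1 and let w, x ∈ ℝⁿ with w₁ ≥ w₂ ≥ … ≥ wₙ. Then the maximum of the linear functional y ↦ ⟨x, y⟩ over the permutahedron P(w) is attained and equals Σ_{i=1}^n wᵢ x_[i], the inner product of w with the vector of coordinates of x sorted in descending order. -/
/-!
The set on which `y ↦ ⟨x, y⟩` stays below a given value is a convex half-space, so the upper bound
need only be checked at the points `w ∘ τ` generating the hull. Reindexing the sum by `σ` turns
`⟨x, w ∘ τ⟩` into the pairing of a permutation of `w` with `x ∘ σ`. As `w` and `x ∘ σ` are both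
antitone, the rearrangement inequality `Monovary.sum_comp_perm_mul_le_sum_mul` bounds it by the
pairing of `w` with `x ∘ σ`. Equality holds at the generator `w ∘ σ⁻¹`.
-/

/-- The permutahedron `P(w)`: the convex hull of all coordinate permutations of `w`. -/
def permutahedron (n : ℕ) (w : Fin n → ℝ) : Set (Fin n → ℝ) :=
  convexHull ℝ {y | ∃ σ : Equiv.Perm (Fin n), y = fun i => w (σ i)}

/-- If `w` is sorted in descending order and `σ` sorts `x` in descending order, then the
maximum of `y ↦ ⟨x, y⟩` over `P(w)` is attained and equals `∑ i, w i * x_[i]`. -/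
theorem lmo_permutahedron (n : ℕ) (hn : 1 ≤ n) (w x : Fin n → ℝ)
    (hw : ∀ i j : Fin n, i ≤ j → w j ≤ w i)
    (σ : Equiv.Perm (Fin n)) (hσ : ∀ i j : Fin n, i ≤ j → x (σ j) ≤ x (σ i)) :
    IsGreatest {v : ℝ | ∃ y ∈ permutahedron n w, v = ∑ i, x i * y i}
      (∑ i, w i * x (σ i)) := by
  have hmono : Monovary w (fun i => x (σ i)) :=
    Antitone.monovary (fun i j h => hw i j h) (fun i j h => hσ i j h)
  constructor
  · refine ⟨fun i => w (σ⁻¹ i), subset_convexHull ℝ _ ⟨σ⁻¹, rfl⟩, ?_⟩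
    rw [← Equiv.sum_comp σ (fun i => x i * w (σ⁻¹ i))]
    simp [mul_comm]
  · rintro v ⟨y, hy, rfl⟩
    have hlin : IsLinearMap ℝ (fun y : Fin n → ℝ => ∑ i, x i * y i) :=
      ⟨fun a b => by simp [mul_add, Finset.sum_add_distrib],
        fun c a => by simp [Finset.mul_sum, mul_left_comm]⟩
    refine convexHull_min ?_ (convex_halfSpace_le hlin (∑ i, w i * x (σ i))) hy
    rintro _ ⟨τ, rfl⟩
    calc ∑ i, x i * w (τ i) = ∑ i, w ((σ.trans τ) i) * x (σ i) := by
          rw [← Equiv.sum_comp σ (fun i => x i * w (τ i))]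
          simp [mul_comm]
      _ ≤ ∑ i, w i * x (σ i) := hmono.sum_comp_perm_mul_le_sum_mul
end

section
/- Let f : ℝⁿ → ℝ and R : ℝⁿ → ℝ be convex (finite-valued) functions, and let f* and R* denote their Fenchel conjugates (with values in ℝ ∪ {+∞}). Then for every x ∈ ℝⁿ, sup_{y ∈ ℝⁿ} ( ⟨y, x⟩ − f*(y) − R(y) ) = inf_{u ∈ ℝⁿ} ( R*(x − u) + f(u) ), and the infimum on the right-hand side is attained. -/
/-! Weak duality is the Fenchel–Young inequality.  For the converse, when the supremum is a real
number `c`, the hypograph of the concave function `y ↦ ⟨y, x⟩ - f*(y) - c` lies below the finite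
convex function `R`, so a non-vertical hyperplane `t = ⟨v, y⟩ - k` separates the two
(`exists_affine_between`).  Lying below `R` means `R*(v) ≤ k`; lying above the hypograph means
`f**(x - v) ≤ c - k`.  A subgradient of `f` at `x - v` (`exists_subgradient`) turns the latter into
`f (x - v) ≤ c - k`, so `u₀ = x - v` satisfies `R*(x - u₀) + f(u₀) ≤ c`. -/

/-- Fenchel conjugate of a finite-valued function on `ℝⁿ`, with values in `ℝ ∪ {+∞}`
(modeled inside `EReal`). -/
noncomputable def fenchelConj {n : ℕ} (g : (Fin n → ℝ) → ℝ) : (Fin n → ℝ) → EReal :=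
  fun y => ⨆ x : Fin n → ℝ, (((∑ i, x i * y i) - g x : ℝ) : EReal)

/-- A nonempty convex set lying weakly below the graph of a finite convex function can be separated
from its strict epigraph by the graph of an affine function: the hyperplane is never vertical
because the epigraph projects onto all of `ℝⁿ`. -/
lemma exists_affine_between {n : ℕ} {g : (Fin n → ℝ) → ℝ} (hg : ConvexOn ℝ Set.univ g)
    {B : Set ((Fin n → ℝ) × ℝ)} (hB : Convex ℝ B) (hne : B.Nonempty)
    (hle : ∀ q ∈ B, q.2 ≤ g q.1) :
    ∃ (v : Fin n → ℝ) (k : ℝ), (∀ y, (∑ i, y i * v i) - k ≤ g y) ∧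
      ∀ q ∈ B, q.2 ≤ (∑ i, q.1 i * v i) - k := by
  have hcont : Continuous g := by
    rw [← continuousOn_univ]
    exact hg.continuousOn isOpen_univ
  have hA : Convex ℝ {q : (Fin n → ℝ) × ℝ | q.1 ∈ Set.univ ∧ g q.1 < q.2} :=
    hg.convex_strict_epigraph
  have hAo : IsOpen {q : (Fin n → ℝ) × ℝ | q.1 ∈ Set.univ ∧ g q.1 < q.2} := by
    simp only [Set.mem_univ, true_and]
    exact isOpen_lt (hcont.comp continuous_fst) continuous_snd
  obtain ⟨L, m, hL1, hL2⟩ := geometric_hahn_banach_open hA hAo hB (by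
    rw [Set.disjoint_left]
    rintro q ⟨-, hq⟩ hqB
    exact absurd (hle q hqB) (not_le.mpr hq))
  set s : ℝ := L (0, 1) with hs
  set w : Fin n → ℝ := fun i => L (Pi.single i 1, 0) with hw
  have hL : ∀ y t, L (y, t) = (∑ i, y i * w i) + t * s := by
    intro y t
    have h1 : L (y, 0) = ∑ i, y i * w i := by
      have := LinearMap.pi_apply_eq_sum_univ
        ((L.comp (ContinuousLinearMap.inl ℝ (Fin n → ℝ) ℝ)).toLinearMap) y
      simp only [ContinuousLinearMap.coe_coe, ContinuousLinearMap.comp_apply,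
        ContinuousLinearMap.inl_apply, smul_eq_mul] at this
      rw [this]
      refine Finset.sum_congr rfl fun i _ => ?_
      simp only [hw]
      congr 4
      ext j
      simp [Pi.single_apply, eq_comm]
    have h2 : L (y, t) = L (y, 0) + t * L (0, 1) := by
      rw [← smul_eq_mul, ← map_smul, ← map_add]
      simp
    rw [h2, h1]
  have hlt : ∀ y t, g y < t → (∑ i, y i * w i) + t * s < m := fun y t h => by
    rw [← hL]; exact hL1 _ ⟨trivial, h⟩
  have hge : ∀ q ∈ B, m ≤ (∑ i, q.1 i * w i) + q.2 * s := fun q h => by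
    rw [← hL]; exact hL2 q h
  -- compare a point of `B` with a point of the epigraph vertically above it
  have hs0 : s < 0 := by
    obtain ⟨q, hq⟩ := hne
    have h1 := hge q hq
    have h2 := hlt q.1 (g q.1 + 1) (by linarith)
    have h3 := hle q hq
    by_contra hcon
    have : q.2 * s ≤ (g q.1 + 1) * s :=
      mul_le_mul_of_nonneg_right (by linarith) (not_lt.mp hcon)
    linarith
  have hsum : ∀ y : Fin n → ℝ, (∑ i, y i * (-(w i) / s)) = -(∑ i, y i * w i) / s := fun y => by
    rw [neg_div, Finset.sum_div, ← Finset.sum_neg_distrib]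
    exact Finset.sum_congr rfl fun i _ => by ring
  refine ⟨fun i => -(w i) / s, -m / s, fun y => ?_, fun q hq => ?_⟩
  · rw [hsum, ← sub_div]
    refine le_of_forall_gt_imp_ge_of_dense fun t ht => ?_
    rw [div_le_iff_of_neg hs0]
    linarith [hlt y t ht]
  · rw [hsum, ← sub_div, le_div_iff_of_neg hs0]
    linarith [hge q hq]

lemma exists_subgradient {n : ℕ} {f : (Fin n → ℝ) → ℝ} (hf : ConvexOn ℝ Set.univ f)
    (u : Fin n → ℝ) :
    ∃ y : Fin n → ℝ, ∀ z, (∑ i, z i * y i) - f z ≤ (∑ i, u i * y i) - f u := by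
  obtain ⟨v, k, h1, h2⟩ := exists_affine_between hf (convex_singleton (u, f u))
    (Set.singleton_nonempty _) (by rintro q rfl; exact le_rfl)
  refine ⟨v, fun z => ?_⟩
  have h3 := h2 _ rfl
  have h4 := h1 z
  simp only at h3
  linarith

lemma le_fenchelConj {n : ℕ} (g : (Fin n → ℝ) → ℝ) (z y : Fin n → ℝ) :
    (((∑ i, z i * y i) - g z : ℝ) : EReal) ≤ fenchelConj g y :=
  le_iSup (fun x : Fin n → ℝ => (((∑ i, x i * y i) - g x : ℝ) : EReal)) z

lemma fenchelConj_le_coe {n : ℕ} {g : (Fin n → ℝ) → ℝ} {y : Fin n → ℝ} {a : ℝ}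
    (h : ∀ z, (∑ i, z i * y i) - g z ≤ a) : fenchelConj g y ≤ (a : EReal) :=
  iSup_le fun z => EReal.coe_le_coe_iff.mpr (h z)

/-- Weak duality, pointwise in both variables. -/
lemma weak_duality {n : ℕ} (f R : (Fin n → ℝ) → ℝ) (x y u : Fin n → ℝ) :
    ((∑ i, y i * x i : ℝ) : EReal) - fenchelConj f y - ((R y : ℝ) : EReal) ≤
      fenchelConj R (fun i => x i - u i) + ((f u : ℝ) : EReal) := by
  calc ((∑ i, y i * x i : ℝ) : EReal) - fenchelConj f y - ((R y : ℝ) : EReal)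
      ≤ ((∑ i, y i * x i : ℝ) : EReal) - (((∑ i, u i * y i) - f u : ℝ) : EReal)
          - ((R y : ℝ) : EReal) :=
        EReal.sub_le_sub (EReal.sub_le_sub le_rfl (le_fenchelConj f u y)) le_rfl
    _ = (((∑ i, y i * (x i - u i)) - R y : ℝ) : EReal) + ((f u : ℝ) : EReal) := by
        norm_cast
        simp only [mul_sub, Finset.sum_sub_distrib, mul_comm (u _)]
        ring
    _ ≤ _ := add_le_add (le_fenchelConj R y _) le_rfl

/-- Strong duality with attainment, for a real upper bound `c` of the dual objective. -/
lemma strong_duality {n : ℕ} {f R : (Fin n → ℝ) → ℝ}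
    (hf : ConvexOn ℝ Set.univ f) (hR : ConvexOn ℝ Set.univ R) (x : Fin n → ℝ) (c : ℝ)
    (hc : ∀ y : Fin n → ℝ, ((∑ i, y i * x i : ℝ) : EReal) - fenchelConj f y - ((R y : ℝ) : EReal)
      ≤ (c : EReal)) :
    ∃ u : Fin n → ℝ, fenchelConj R (fun i => x i - u i) + ((f u : ℝ) : EReal) ≤ (c : EReal) := by
  -- the hypograph of `y ↦ ⟨y, x⟩ - f*(y) - c`, with `f*` unfolded so that only reals occur
  let B : Set ((Fin n → ℝ) × ℝ) :=
    {q | ∀ z, (∑ i, z i * q.1 i) - f z ≤ (∑ i, q.1 i * x i) - c - q.2}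
  have hB : Convex ℝ B := by
    intro p hp q hq a b ha hb hab z
    have h1 := mul_le_mul_of_nonneg_left (hp z) ha
    have h2 := mul_le_mul_of_nonneg_left (hq z) hb
    have e1 : (∑ i, z i * (a • p + b • q).1 i)
        = a * (∑ i, z i * p.1 i) + b * (∑ i, z i * q.1 i) := by
      simp only [Finset.mul_sum, ← Finset.sum_add_distrib]
      exact Finset.sum_congr rfl fun i _ => by simp; ring
    have e2 : (∑ i, (a • p + b • q).1 i * x i)
        = a * (∑ i, p.1 i * x i) + b * (∑ i, q.1 i * x i) := by
      simp only [Finset.mul_sum, ← Finset.sum_add_distrib]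
      exact Finset.sum_congr rfl fun i _ => by simp; ring
    have e3 : (a • p + b • q).2 = a * p.2 + b * q.2 := by simp
    rw [e1, e2, e3]
    have hb' : b = 1 - a := by linarith
    subst hb'
    linarith
  have hne : B.Nonempty := by
    obtain ⟨y, hy⟩ := exists_subgradient hf 0
    refine ⟨(y, (∑ i, y i * x i) - c - ((∑ i, (0 : Fin n → ℝ) i * y i) - f 0)), fun z => ?_⟩
    have := hy z
    simp only
    linarith
  have hle : ∀ q ∈ B, q.2 ≤ R q.1 := by
    intro q hq
    have h1 : fenchelConj f q.1 ≤ (((∑ i, q.1 i * x i) - c - q.2 : ℝ) : EReal) :=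
      fenchelConj_le_coe hq
    have h2 := (EReal.sub_le_sub (EReal.sub_le_sub
      (le_refl ((∑ i, q.1 i * x i : ℝ) : EReal)) h1) (le_refl (R q.1 : EReal))).trans (hc q.1)
    norm_cast at h2
    linarith
  obtain ⟨v, k, h1, h2⟩ := exists_affine_between hR hB hne hle
  refine ⟨fun i => x i - v i, ?_⟩
  have hv : (fun i => x i - (x i - v i)) = v := by ext i; ring
  rw [hv]
  have hRv : fenchelConj R v ≤ (k : EReal) := fenchelConj_le_coe fun z => by linarith [h1 z]
  have hfu : f (fun i => x i - v i) ≤ c - k := by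
    obtain ⟨y, hy⟩ := exists_subgradient hf (fun i => x i - v i)
    have h3 := h2 (y, (∑ i, y i * x i) - c
      - ((∑ i, (x i - v i) * y i) - f (fun i => x i - v i))) fun z => by
        have := hy z
        simp only at this ⊢
        linarith
    simp only [sub_mul, Finset.sum_sub_distrib, mul_comm (y _)] at h3
    linarith
  calc fenchelConj R v + ((f (fun i => x i - v i) : ℝ) : EReal)
      ≤ (k : EReal) + ((c - k : ℝ) : EReal) := add_le_add hRv (EReal.coe_le_coe_iff.mpr hfu)
    _ = (c : EReal) := by norm_cast; ring

/-- For finite convex `f, R : ℝⁿ → ℝ`,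
`sup_y (⟨y, x⟩ − f*(y) − R(y)) = inf_u (R*(x − u) + f(u))`, and the infimum is attained. -/
theorem fenchel_duality_infconv (n : ℕ) (f R : (Fin n → ℝ) → ℝ)
    (hf : ConvexOn ℝ Set.univ f) (hR : ConvexOn ℝ Set.univ R) (x : Fin n → ℝ) :
    (⨆ y : Fin n → ℝ,
        (((∑ i, y i * x i : ℝ) : EReal) - fenchelConj f y - ((R y : ℝ) : EReal))) =
      (⨅ u : Fin n → ℝ, fenchelConj R (fun i => x i - u i) + ((f u : ℝ) : EReal)) ∧
    ∃ u₀ : Fin n → ℝ,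
      fenchelConj R (fun i => x i - u₀ i) + ((f u₀ : ℝ) : EReal) =
        ⨅ u : Fin n → ℝ, fenchelConj R (fun i => x i - u i) + ((f u : ℝ) : EReal) := by
  set D : (Fin n → ℝ) → EReal := fun y =>
    ((∑ i, y i * x i : ℝ) : EReal) - fenchelConj f y - ((R y : ℝ) : EReal) with hD
  set P : (Fin n → ℝ) → EReal := fun u =>
    fenchelConj R (fun i => x i - u i) + ((f u : ℝ) : EReal) with hP
  have hweak : ⨆ y, D y ≤ ⨅ u, P u :=
    iSup_le fun y => le_iInf fun u => weak_duality f R x y u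
  suffices h : ∃ u₀, P u₀ ≤ ⨆ y, D y by
    obtain ⟨u₀, hu₀⟩ := h
    exact ⟨le_antisymm hweak ((iInf_le P u₀).trans hu₀), u₀,
      le_antisymm (hu₀.trans hweak) (iInf_le P u₀)⟩
  have hbot : ⨆ y, D y ≠ ⊥ := by
    -- a subgradient of `f` at `0` is a point where `f*` is finite
    obtain ⟨y, hy⟩ := exists_subgradient hf 0
    have h1 := EReal.sub_le_sub (EReal.sub_le_sub
      (le_refl ((∑ i, y i * x i : ℝ) : EReal)) (fenchelConj_le_coe hy)) (le_refl (R y : EReal))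
    have h2 := h1.trans (le_iSup D y)
    intro hcon
    rw [hcon, le_bot_iff] at h2
    norm_cast at h2
  by_cases htop : ⨆ y, D y = ⊤
  · exact ⟨0, htop ▸ le_top⟩
  · have hc := EReal.coe_toReal htop hbot
    obtain ⟨u, hu⟩ := strong_duality hf hR x (⨆ y, D y).toReal
      (fun y => by rw [hc]; exact le_iSup D y)
    exact ⟨u, hu.trans hc.le⟩
end

section
/- Let n ≥ 1 and 1 ≤ k ≤ n. Define Φ_k : ℝⁿ → ℝ ∪ {+∞} by Φ_k(y) = (1/2)Σ_{i=1}^n yᵢ² if y has at most k nonzero coordinates, and Φ_k(y) = +∞ otherwise. Then the Fenchel conjugate of Φ_k is given for every x ∈ ℝⁿ by Φ_k*(x) = (1/2) Σ_{i=1}^k (x²)_[i], the half-sum of the k largest values among x₁², …, xₙ². -/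
/-!
Let `S` be the support of `y`, with at most `k` elements. Completing the square,
`⟨x, y⟩ - (1/2) ∑ yᵢ² ≤ (1/2) ∑_{i ∈ S} xᵢ²`, with equality when `y = x` on `S`. So the conjugate is
half the largest sum of at most `k` of the numbers `xᵢ²`. That this is the sum of the `k` largest
is `sum_le_sum_sortDesc`, proved with the `k`-th largest value `t` as threshold: both
`∑_{i ∈ S} aᵢ ≤ k t + ∑ᵢ max (aᵢ - t) 0` for every such `S`, and the sum of the `k` largest values
is equal to this bound. The supremum is attained at the restriction of `x` to the positions of its
`k` largest squares.
-/

/-- `sortDesc g i` is the `i`-th largest value (0-indexed) among the coordinates of `g`. -/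
noncomputable def sortDesc {n : ℕ} (g : Fin n → ℝ) : Fin n → ℝ :=
  fun i => g (Tuple.sort g (Fin.rev i))

/-- `Φ_k(y) = (1/2) ∑ yᵢ²` if `y` has at most `k` nonzero coordinates, `+∞` otherwise. -/
noncomputable def Phik (n k : ℕ) : (Fin n → ℝ) → EReal := fun y =>
  if (Finset.univ.filter fun i => y i ≠ 0).card ≤ k
    then (((1 : ℝ) / 2 * ∑ i, (y i) ^ 2 : ℝ) : EReal) else ⊤

/-- Fenchel conjugate of an `EReal`-valued function on `ℝⁿ`. -/
noncomputable def fenchelConjE {n : ℕ} (g : (Fin n → ℝ) → EReal) : (Fin n → ℝ) → EReal :=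
  fun x => ⨆ y : Fin n → ℝ, (((∑ i, x i * y i : ℝ) : EReal) - g y)

/-- The permutation that sends a rank `i` (0-indexed, in decreasing order) to a position of the
`i`-th largest coordinate of `a`. -/
noncomputable def rankPerm {n : ℕ} (a : Fin n → ℝ) : Equiv.Perm (Fin n) :=
  Fin.revPerm.trans (Tuple.sort a)

lemma sortDesc_eq {n : ℕ} (a : Fin n → ℝ) (i : Fin n) : sortDesc a i = a (rankPerm a i) := rfl

lemma sortDesc_antitone {n : ℕ} (a : Fin n → ℝ) : Antitone (sortDesc a) := fun _ _ h =>
  Tuple.monotone_sort a (Fin.rev_le_rev.mpr h)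

/-- Among sums of at most `k` coordinates of a nonnegative vector, that of the `k` largest ones
is maximal. -/
lemma sum_le_sum_sortDesc {n k : ℕ} (hk1 : 1 ≤ k) (hkn : k ≤ n) (a : Fin n → ℝ)
    (ha : ∀ i, 0 ≤ a i) (S : Finset (Fin n)) (hS : S.card ≤ k) :
    ∑ i ∈ S, a i ≤ ∑ i : Fin n, (if (i : ℕ) < k then sortDesc a i else 0) := by
  -- the threshold: the `k`-th largest value has 0-based rank `k - 1`
  obtain ⟨t, ht⟩ : ∃ t, t = sortDesc a ⟨k - 1, by omega⟩ := ⟨_, rfl⟩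
  have ht0 : 0 ≤ t := by rw [ht]; exact ha _
  have hcard : ∑ i : Fin n, (if (i : ℕ) < k then t else 0) = k * t := by
    rw [← Finset.sum_filter, Finset.sum_const, Fin.card_filter_val_lt, nsmul_eq_mul,
      min_eq_right hkn]
  have hpt : ∀ i : Fin n, (if (i : ℕ) < k then sortDesc a i else 0)
      = max (a (rankPerm a i) - t) 0 + (if (i : ℕ) < k then t else 0) := by
    intro i
    rw [← sortDesc_eq a i]
    split_ifs with h
    · have : t ≤ sortDesc a i := by
        rw [ht]; exact sortDesc_antitone a (Fin.le_def.mpr (by simp only; omega))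
      rw [max_eq_left (by linarith)]; ring
    · have : sortDesc a i ≤ t := by
        rw [ht]; exact sortDesc_antitone a (Fin.le_def.mpr (by simp only; omega))
      rw [max_eq_right (by linarith)]; ring
  calc ∑ i ∈ S, a i ≤ ∑ i ∈ S, (max (a i - t) 0 + t) :=
        Finset.sum_le_sum fun i _ => by linarith [le_max_left (a i - t) 0]
    _ = ∑ i ∈ S, max (a i - t) 0 + S.card * t := by
        rw [Finset.sum_add_distrib, Finset.sum_const, nsmul_eq_mul]
    _ ≤ ∑ i, max (a i - t) 0 + k * t := by
        refine add_le_add (Finset.sum_le_sum_of_subset_of_nonneg (Finset.subset_univ S)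
          fun i _ _ => le_max_right _ _) ?_
        exact mul_le_mul_of_nonneg_right (by exact_mod_cast hS) ht0
    _ = _ := by
        rw [Finset.sum_congr rfl fun i _ => hpt i, Finset.sum_add_distrib, hcard,
          Equiv.sum_comp (rankPerm a) fun j => max (a j - t) 0]

/-- The Fenchel conjugate of `Φ_k` is half the sum of the `k` largest squared coordinates. -/
theorem conj_Phik (n k : ℕ) (hn : 1 ≤ n) (hk1 : 1 ≤ k) (hkn : k ≤ n) (x : Fin n → ℝ) :
    fenchelConjE (Phik n k) x =
      (((1 : ℝ) / 2 * ∑ i : Fin n,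
        (if (i : ℕ) < k then sortDesc (fun j => (x j) ^ 2) i else 0) : ℝ) : EReal) := by
  unfold fenchelConjE
  apply le_antisymm
  · refine iSup_le fun y => ?_
    unfold Phik
    split_ifs with h
    · rw [← EReal.coe_sub, EReal.coe_le_coe_iff]
      have h1 := sum_le_sum_sortDesc hk1 hkn (fun j => (x j) ^ 2) (fun j => sq_nonneg _) _ h
      have h2 : ∑ i, x i * y i - 1 / 2 * ∑ i, (y i) ^ 2
          ≤ 1 / 2 * ∑ i ∈ Finset.univ.filter (fun i => y i ≠ 0), (x i) ^ 2 := by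
        rw [Finset.sum_filter, Finset.mul_sum, Finset.mul_sum, ← Finset.sum_sub_distrib]
        refine Finset.sum_le_sum fun i _ => ?_
        split_ifs with hi
        · nlinarith [sq_nonneg (x i - y i)]
        · simp [not_not.mp hi]
      linarith
    · simp
  · set e := rankPerm fun j => (x j) ^ 2 with he
    -- the maximizer: `x` restricted to the positions of rank less than `k`
    refine le_iSup_of_le (fun j => if (e.symm j : ℕ) < k then x j else 0) ?_
    have hc : (Finset.univ.filter fun j =>
        (if (e.symm j : ℕ) < k then x j else 0) ≠ 0).card ≤ k := by
      rw [← Finset.card_range k]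
      refine Finset.card_le_card_of_injOn (fun j => (e.symm j : ℕ)) (fun j hj => ?_)
        fun i _ j _ hij => e.symm.injective (Fin.ext hij)
      by_contra hlt
      simp_all
    unfold Phik
    rw [if_pos hc, ← EReal.coe_sub, EReal.coe_le_coe_iff]
    apply ge_of_eq
    rw [Finset.mul_sum, Finset.mul_sum, ← Finset.sum_sub_distrib]
    refine (Equiv.sum_comp e _).symm.trans ?_
    refine Finset.sum_congr rfl fun i _ => ?_
    rw [sortDesc_eq, ← he]
    simp only [Equiv.symm_apply_apply]
    split_ifs <;> ring
end

section
/- Let n ≥ 1 and 1 ≤ k ≤ n. Define Φ_k : ℝⁿ → ℝ ∪ {+∞} by Φ_k(y) = (1/2)Σ_{i=1}^n yᵢ² if y has at most k nonzero coordinates, and Φ_k(y) = +∞ otherwise. Then the biconjugate of Φ_k is the squared k-support norm: for every y ∈ ℝⁿ, Φ_k**(y) = inf { (1/2) Σ_{i=1}^n yᵢ² / zᵢ : z ∈ P(1_k), zᵢ > 0 for all i }. -/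
/-- `1_k ∈ ℝⁿ`: first `k` coordinates equal to `1`, the rest equal to `0`. -/
def onek (n k : ℕ) : Fin n → ℝ := fun i => if (i : ℕ) < k then 1 else 0

/-- The indicator of a `k`-element set is a generator of `P(1_k)`. -/
lemma indicator_mem_permutahedron {n k : ℕ} (hkn : k ≤ n) (T : Finset (Fin n))
    (hT : T.card = k) :
    (fun i => if i ∈ T then (1 : ℝ) else 0) ∈ permutahedron n (onek n k) := by
  apply subset_convexHull
  have hc : Fintype.card {i : Fin n // i ∈ T} = Fintype.card {i : Fin n // (i : ℕ) < k} := by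
    rw [Fintype.card_coe, hT, Fintype.card_subtype, Fin.card_filter_val_lt]
    omega
  let e := Fintype.equivOfCardEq hc
  refine ⟨e.extendSubtype, ?_⟩
  funext i
  by_cases hi : i ∈ T
  · have := e.extendSubtype_mem i hi
    simp [onek, hi, this]
  · have := e.extendSubtype_not_mem i hi
    simp only [onek, hi, this, if_false]

/-- An upper bound for `z ↦ (1/2) ∑ zᵢ xᵢ²` on `P(1_k)` bounds the conjugate of `Φ_k` at `x`. -/
lemma conj_Phik_le {n k : ℕ} (hkn : k ≤ n) (x : Fin n → ℝ) (C : ℝ)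
    (h : ∀ z ∈ permutahedron n (onek n k), 1 / 2 * ∑ i, z i * x i ^ 2 ≤ C) :
    fenchelConjE (Phik n k) x ≤ (C : EReal) := by
  refine iSup_le fun u => ?_
  unfold Phik
  split_ifs with hu
  · obtain ⟨T, hST, hT⟩ := Finset.exists_superset_card_eq hu (by simpa using hkn)
    rw [← EReal.coe_sub, EReal.coe_le_coe_iff]
    refine le_trans ?_ (h _ (indicator_mem_permutahedron hkn T hT))
    rw [Finset.mul_sum, Finset.mul_sum, ← Finset.sum_sub_distrib]
    refine Finset.sum_le_sum fun i _ => ?_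
    by_cases hi : i ∈ T
    · simp only [hi, if_true]
      nlinarith [sq_nonneg (x i - u i)]
    · have h0 : u i = 0 := by
        by_contra hne
        exact hi (hST (by simp [hne]))
      simp [hi, h0]
  · simp

/-- Every `z ∈ P(1_k)` gives a lower bound for the conjugate of `Φ_k`. -/
lemma le_conj_Phik {n k : ℕ} (x z : Fin n → ℝ)
    (hz : z ∈ permutahedron n (onek n k)) :
    ((1 / 2 * ∑ i, z i * x i ^ 2 : ℝ) : EReal) ≤ fenchelConjE (Phik n k) x := by
  have hconv : ConvexOn ℝ Set.univ (fun z : Fin n → ℝ => 1 / 2 * ∑ i, z i * x i ^ 2) := by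
    refine ⟨convex_univ, fun a _ b _ s t _ _ _ => le_of_eq ?_⟩
    simp only [Pi.add_apply, Pi.smul_apply, smul_eq_mul, Finset.mul_sum,
      ← Finset.sum_add_distrib]
    exact Finset.sum_congr rfl fun i _ => by ring
  -- A linear function on a convex hull is dominated by its value at some generator.
  obtain ⟨g, ⟨σ, hσ⟩, hg⟩ := (hconv.subset (Set.subset_univ _) (convex_convexHull ℝ
    {y | ∃ σ : Equiv.Perm (Fin n), y = fun i => onek n k (σ i)})).exists_ge_of_mem_convexHull
    (subset_convexHull ℝ _) hz
  refine (EReal.coe_le_coe_iff.2 hg).trans ?_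
  have h01 : ∀ i, g i = 0 ∨ g i = 1 := by
    intro i
    simp only [hσ, onek]
    split_ifs <;> simp
  have hcard : (Finset.univ.filter fun i => g i * x i ≠ 0).card ≤ k := by
    calc (Finset.univ.filter fun i => g i * x i ≠ 0).card
        ≤ (Finset.univ.filter fun j : Fin n => (j : ℕ) < k).card := by
          refine Finset.card_le_card_of_injOn σ ?_ σ.injective.injOn
          intro i hi
          simp only [Finset.coe_filter, Finset.mem_univ, true_and, Set.mem_ofPred_eq] at hi ⊢
          by_contra hc
          exact hi (by simp [hσ, onek, hc])
      _ ≤ k := by rw [Fin.card_filter_val_lt]; exact min_le_right _ _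
  refine le_trans ?_ (le_iSup _ (fun i => g i * x i))
  unfold Phik
  rw [if_pos hcard, ← EReal.coe_sub, EReal.coe_le_coe_iff, Finset.mul_sum, Finset.mul_sum,
    ← Finset.sum_sub_distrib]
  refine Finset.sum_le_sum fun i _ => le_of_eq ?_
  rcases h01 i with h | h <;> simp only [h] <;> ring

lemma permutahedron_nonneg {n k : ℕ} {z : Fin n → ℝ} (hz : z ∈ permutahedron n (onek n k))
    (i : Fin n) : 0 ≤ z i := by
  have hsub : permutahedron n (onek n k) ⊆ {z : Fin n → ℝ | 0 ≤ z} := by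
    refine convexHull_min ?_ (convex_Ici (0 : Fin n → ℝ))
    rintro _ ⟨σ, rfl⟩ j
    simp only [onek, Pi.zero_apply]
    split_ifs <;> norm_num
  exact hsub hz i

lemma isCompact_permutahedron (n : ℕ) (w : Fin n → ℝ) : IsCompact (permutahedron n w) := by
  refine Set.Finite.isCompact_convexHull ℝ ?_
  refine (Set.finite_range fun σ : Equiv.Perm (Fin n) => fun i => w (σ i)).subset ?_
  rintro _ ⟨σ, rfl⟩
  exact ⟨σ, rfl⟩

/-- The average of all generators of `P(1_k)` is a point with positive coordinates. -/
lemma exists_pos_mem {n k : ℕ} (hn : 1 ≤ n) (hk1 : 1 ≤ k) :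
    ∃ z ∈ permutahedron n (onek n k), ∀ i, 0 < z i := by
  have hN : (0 : ℝ) < Fintype.card (Equiv.Perm (Fin n)) := by
    exact_mod_cast Fintype.card_pos
  refine ⟨∑ σ : Equiv.Perm (Fin n),
    (1 / (Fintype.card (Equiv.Perm (Fin n)) : ℝ)) • (fun i => onek n k (σ i)), ?_, ?_⟩
  · refine (convex_convexHull ℝ _).sum_mem (fun _ _ => by positivity) ?_
      fun σ _ => subset_convexHull ℝ _ ⟨σ, rfl⟩
    rw [Finset.sum_const, nsmul_eq_mul, Finset.card_univ]
    field_simp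
  · intro i
    rw [Finset.sum_apply]
    refine Finset.sum_pos' (fun σ _ => ?_)
      ⟨Equiv.swap i ⟨0, by omega⟩, Finset.mem_univ _, ?_⟩
    · simp only [Pi.smul_apply, smul_eq_mul, onek]
      split_ifs <;> positivity
    · have : 0 < k := by omega
      simp only [Pi.smul_apply, smul_eq_mul, onek, Equiv.swap_apply_left, this, if_true]
      positivity

/-- First order optimality of a positive minimizer `w` of `∑ yᵢ² / wᵢ` on a convex set. -/
lemma first_order {n : ℕ} {K : Set (Fin n → ℝ)} (hK : Convex ℝ K) (hpos : ∀ v ∈ K, ∀ i, 0 < v i)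
    (y w : Fin n → ℝ) (hw : w ∈ K)
    (hmin : ∀ v ∈ K, ∑ i, y i ^ 2 / w i ≤ ∑ i, y i ^ 2 / v i)
    (v : Fin n → ℝ) (hv : v ∈ K) :
    ∑ i, v i * (y i / w i) ^ 2 ≤ ∑ i, y i ^ 2 / w i := by
  -- The difference quotient of the objective along the segment from `w` to `v`, negated.
  let q : ℝ → ℝ := fun t => ∑ i, y i ^ 2 * (v i - w i) / (w i * (w i + t * (v i - w i)))
  have hq : ∀ t ∈ Set.Ioo (0 : ℝ) 1, q t ≤ 0 := by
    intro t ht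
    have hmem : (fun i => w i + t * (v i - w i)) ∈ K := by
      have := hK.add_smul_sub_mem hw hv ⟨ht.1.le, ht.2.le⟩
      exact this
    have h1 := hmin _ hmem
    have h2 : t * q t = ∑ i, y i ^ 2 / w i - ∑ i, y i ^ 2 / (w i + t * (v i - w i)) := by
      rw [← Finset.sum_sub_distrib, Finset.mul_sum]
      refine Finset.sum_congr rfl fun i _ => ?_
      have ha := (hpos w hw i).ne'
      have hb : w i + t * (v i - w i) ≠ 0 := (hpos _ hmem i).ne'
      rw [div_sub_div _ _ ha hb, ← mul_div_assoc]
      congr 1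
      ring
    have h3 : t * q t ≤ 0 := by linarith
    by_contra hc
    push Not at hc
    exact absurd (mul_pos ht.1 hc) (not_lt.2 h3)
  have hcont : ContinuousAt q 0 := by
    refine tendsto_finsetSum _ fun i _ => ?_
    have ha := (hpos w hw i).ne'
    have : ContinuousAt
        (fun t : ℝ => y i ^ 2 * (v i - w i) / (w i * (w i + t * (v i - w i)))) 0 := by
      refine ContinuousAt.div (by fun_prop) (by fun_prop) (by simpa using ha)
    exact this
  have h0 : q 0 ≤ 0 := by
    refine le_of_tendsto (hcont.tendsto.mono_left (nhdsWithin_le_nhds (s := Set.Ioi 0))) ?_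
    filter_upwards [Ioo_mem_nhdsGT (zero_lt_one' ℝ)] with t ht using hq t ht
  have h4 : q 0 = ∑ i, v i * (y i / w i) ^ 2 - ∑ i, y i ^ 2 / w i := by
    rw [← Finset.sum_sub_distrib]
    refine Finset.sum_congr rfl fun i _ => ?_
    have ha := (hpos w hw i).ne'
    rw [zero_mul, add_zero]
    field_simp
  linarith

/-- `∑ yᵢ² / vᵢ` is continuous on positive vectors, so it attains its minimum on a compact set. -/
lemma exists_minimizer {n : ℕ} {K : Set (Fin n → ℝ)} (hK : IsCompact K) (hne : K.Nonempty)
    (hpos : ∀ v ∈ K, ∀ i, 0 < v i) (y : Fin n → ℝ) :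
    ∃ w ∈ K, ∀ v ∈ K, ∑ i, y i ^ 2 / w i ≤ ∑ i, y i ^ 2 / v i := by
  have hc : ContinuousOn (fun v : Fin n → ℝ => ∑ i, y i ^ 2 / v i) K := by
    refine continuousOn_finsetSum _ fun i _ => ?_
    exact ContinuousOn.div (by fun_prop) (by fun_prop) fun v hv => (hpos v hv i).ne'
  obtain ⟨w, hw, hmin⟩ := hK.exists_isMinOn hne hc
  exact ⟨w, hw, fun v hv => hmin hv⟩

/-- Approximate strong duality: for every `s < 1` some positive `w ∈ P(1_k)` has
`s` times its primal value below the biconjugate. -/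
lemma approx_duality {n k : ℕ} (hn : 1 ≤ n) (hk1 : 1 ≤ k) (hkn : k ≤ n) (y : Fin n → ℝ)
    (s : ℝ) (hs0 : 0 ≤ s) (hs1 : s < 1) :
    ∃ w ∈ permutahedron n (onek n k), (∀ i, 0 < w i) ∧
      ((s * (1 / 2 * ∑ i, y i ^ 2 / w i) : ℝ) : EReal) ≤
        fenchelConjE (fenchelConjE (Phik n k)) y := by
  obtain ⟨z₀, hz₀, hz₀pos⟩ := exists_pos_mem (n := n) (k := k) hn hk1
  have hPc : Convex ℝ (permutahedron n (onek n k)) := convex_convexHull ℝ _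
  let K : Set (Fin n → ℝ) := (fun z => (1 - s) • z₀ + s • z) '' permutahedron n (onek n k)
  have hKsub : K ⊆ permutahedron n (onek n k) := by
    rintro _ ⟨z, hz, rfl⟩
    exact hPc hz₀ hz (by linarith) hs0 (by ring)
  have hKpos : ∀ v ∈ K, ∀ i, 0 < v i := by
    rintro _ ⟨z, hz, rfl⟩ i
    have h1 : 0 < (1 - s) * z₀ i := mul_pos (by linarith) (hz₀pos i)
    have h2 : 0 ≤ s * z i := mul_nonneg hs0 (permutahedron_nonneg hz i)
    simp only [Pi.add_apply, Pi.smul_apply, smul_eq_mul]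
    linarith
  have hKcomp : IsCompact K := (isCompact_permutahedron n _).image (by fun_prop)
  have hKconv : Convex ℝ K := by
    have := (hPc.smul s).translate ((1 - s) • z₀)
    rwa [← Set.image_smul, Set.image_image] at this
  obtain ⟨w, hw, hmin⟩ := exists_minimizer hKcomp ⟨_, z₀, hz₀, rfl⟩ hKpos y
  refine ⟨w, hKsub hw, hKpos w hw, ?_⟩
  set F := ∑ i, y i ^ 2 / w i with hF
  have hconj : fenchelConjE (Phik n k) (fun i => s * (y i / w i)) ≤
      ((s * (1 / 2 * F) : ℝ) : EReal) := by
    refine conj_Phik_le hkn _ _ fun z hz => ?_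
    have h1 := first_order hKconv hKpos y w hw hmin _ ⟨z, hz, rfl⟩
    have h2 : s * ∑ i, z i * (y i / w i) ^ 2 ≤ F := by
      refine le_trans ?_ h1
      rw [Finset.mul_sum]
      refine Finset.sum_le_sum fun i _ => ?_
      have h3 : 0 ≤ (1 - s) * z₀ i * (y i / w i) ^ 2 :=
        mul_nonneg (mul_nonneg (by linarith) (hz₀pos i).le) (sq_nonneg _)
      simp only [Pi.add_apply, Pi.smul_apply, smul_eq_mul]
      linarith
    have h4 : ∑ i, z i * (s * (y i / w i)) ^ 2 = s * (s * ∑ i, z i * (y i / w i) ^ 2) := by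
      rw [Finset.mul_sum, Finset.mul_sum]
      exact Finset.sum_congr rfl fun i _ => by ring
    rw [h4]
    nlinarith [mul_le_mul_of_nonneg_left h2 hs0]
  refine le_trans ?_ (le_iSup _ (fun i => s * (y i / w i)))
  refine le_trans ?_ (EReal.sub_le_sub le_rfl hconj)
  rw [← EReal.coe_sub, EReal.coe_le_coe_iff]
  have h5 : ∑ i, y i * (s * (y i / w i)) = s * F := by
    rw [hF, Finset.mul_sum]
    exact Finset.sum_congr rfl fun i _ => by ring
  rw [h5]
  linarith

/-- The biconjugate of `Φ_k` is the squared `k`-support norm: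
`Φ_k**(y) = inf { (1/2) ∑ yᵢ²/zᵢ : z ∈ P(1_k), zᵢ > 0 }`. -/
theorem biconj_Phik (n k : ℕ) (hn : 1 ≤ n) (hk1 : 1 ≤ k) (hkn : k ≤ n) (y : Fin n → ℝ) :
    fenchelConjE (fenchelConjE (Phik n k)) y =
      ⨅ z ∈ {z : Fin n → ℝ | z ∈ permutahedron n (onek n k) ∧ ∀ i, 0 < z i},
        (((1 : ℝ) / 2 * ∑ i, (y i) ^ 2 / z i : ℝ) : EReal) := by
  apply le_antisymm
  · refine iSup_le fun x => le_iInf₂ fun z hz => ?_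
    refine (EReal.sub_le_sub le_rfl (le_conj_Phik x z hz.1)).trans ?_
    rw [← EReal.coe_sub, EReal.coe_le_coe_iff, Finset.mul_sum, Finset.mul_sum,
      ← Finset.sum_sub_distrib]
    refine Finset.sum_le_sum fun i _ => ?_
    have hzi := hz.2 i
    have h1 : 1 / 2 * (y i ^ 2 / z i) - (y i * x i - 1 / 2 * (z i * x i ^ 2)) =
        (y i - z i * x i) ^ 2 / (2 * z i) := by
      field_simp
      ring
    have h2 : 0 ≤ (y i - z i * x i) ^ 2 / (2 * z i) := by positivity
    linarith
  · by_contra hlt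
    rw [not_le] at hlt
    obtain ⟨c, hc, hcI⟩ := EReal.lt_iff_exists_real_btwn.1 hlt
    obtain ⟨d, hcd, hdI⟩ := EReal.lt_iff_exists_real_btwn.1 hcI
    rw [EReal.coe_lt_coe_iff] at hcd
    -- Any `s < 1` gives `s * d < c`; the case `s = 0` yields `0 < c`, and `s = c / d` is absurd.
    have key : ∀ s : ℝ, 0 ≤ s → s < 1 → s * d < c := by
      intro s hs0 hs1
      obtain ⟨w, hw, hwpos, hle⟩ := approx_duality hn hk1 hkn y s hs0 hs1
      have h1 := EReal.coe_lt_coe_iff.1 (hle.trans_lt hc)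
      have h2 := EReal.coe_lt_coe_iff.1 (hdI.trans_le (iInf₂_le w ⟨hw, hwpos⟩))
      exact (mul_le_mul_of_nonneg_left h2.le hs0).trans_lt h1
    have hc0 : 0 < c := by simpa using key 0 le_rfl one_pos
    have hd0 : 0 < d := hc0.trans hcd
    have := key (c / d) (by positivity) ((div_lt_one hd0).2 hcd)
    rw [div_mul_cancel₀ _ hd0.ne'] at this
    exact lt_irrefl _ this
end

section
/- Let n ≥ 1, let r* : ℝ → ℝ be convex, even (r*(−t) = r*(t)) and nondecreasing on [0, ∞), and set R*(z) := Σ_{i=1}^n r*(zᵢ). Let φ : ℝ → ℝ be even and nondecreasing on [0, ∞). Let w ∈ ℝⁿ with w₁ ≥ … ≥ wₙ ≥ 0, and define f_φ(u, w) := Σ_{i=1}^n wᵢ · φ(u)_[i], where φ(u)_[i] is the i-th largest value among φ(u₁),…,φ(uₙ). Let x ∈ ℝⁿ, let σ be a permutation with |x_{σ(1)}| ≥ … ≥ |x_{σ(n)}|, and set s := (|x_{σ(1)}|,…,|x_{σ(n)}|). If v* minimizes v ↦ R*(s − v) + Σ_{i=1}^n wᵢ φ(vᵢ) over the nonnegative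 monotone cone {v ∈ ℝⁿ : v₁ ≥ … ≥ vₙ ≥ 0}, then the vector u* ∈ ℝⁿ defined by u*_{σ(i)} = sign(x_{σ(i)}) · v*ᵢ (with sign(0) = 0) minimizes u ↦ R*(x − u) + f_φ(u, w) over all of ℝⁿ, and the two minimum values are equal. -/
/-- Any permutation that puts `g` in descending order computes `sortDesc g`. -/
lemma sortDesc_eq_s11 {n : ℕ} (g : Fin n → ℝ) (τ : Equiv.Perm (Fin n))
    (h : ∀ i j : Fin n, i ≤ j → g (τ j) ≤ g (τ i)) (i : Fin n) :
    sortDesc g i = g (τ i) := by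
  have h1 : Monotone (g ∘ (Fin.revPerm.trans τ)) := by
    intro i j hij
    exact h _ _ (Fin.rev_le_rev.mpr hij)
  have h2 := Tuple.unique_monotone (Tuple.monotone_sort g) h1
  have h3 := congrFun h2 (Fin.rev i)
  simpa [sortDesc] using h3

lemma even_mono_le {r : ℝ → ℝ} (hreven : ∀ t : ℝ, r (-t) = r t)
    (hrmono : ∀ a b : ℝ, 0 ≤ a → a ≤ b → r a ≤ r b) {a b : ℝ} (h : |a| ≤ |b|) :
    r a ≤ r b := by
  have habs : ∀ t, r |t| = r t := by
    intro t
    rcases abs_choice t with h | h <;> rw [h]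
    exact hreven t
  rw [← habs a, ← habs b]
  exact hrmono _ _ (abs_nonneg _) h

/-- Submodularity of `(a, b) ↦ r (a - b)` for convex `r`. -/
lemma convex_two_point {r : ℝ → ℝ} (hr : ConvexOn ℝ Set.univ r) {a₀ a₁ b₀ b₁ : ℝ}
    (ha : a₁ ≤ a₀) (hb : b₁ ≤ b₀) :
    r (a₀ - b₀) + r (a₁ - b₁) ≤ r (a₀ - b₁) + r (a₁ - b₀) := by
  rcases eq_or_lt_of_le ha with rfl | ha'
  · linarith
  -- Both `a₀ - b₀` and `a₁ - b₁` lie between `a₁ - b₀` and `a₀ - b₁`, with exchanged weights.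
  have hd : 0 < (a₀ - a₁) + (b₀ - b₁) := by linarith
  obtain ⟨D, hD⟩ : ∃ D, D = (a₀ - a₁) + (b₀ - b₁) := ⟨_, rfl⟩
  rw [← hD] at hd
  have hp : 0 ≤ (a₀ - a₁) / D := div_nonneg (by linarith) hd.le
  have hq : 0 ≤ (b₀ - b₁) / D := div_nonneg (by linarith) hd.le
  have hpq : (a₀ - a₁) / D + (b₀ - b₁) / D = 1 := by
    rw [← add_div, ← hD, div_self hd.ne']
  have h1 := hr.2 (Set.mem_univ (a₀ - b₁)) (Set.mem_univ (a₁ - b₀)) hp hq hpq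
  have h2 := hr.2 (Set.mem_univ (a₁ - b₀)) (Set.mem_univ (a₀ - b₁)) hp hq hpq
  have e1 : ((a₀ - a₁) / D) • (a₀ - b₁) + ((b₀ - b₁) / D) • (a₁ - b₀) = a₀ - b₀ := by
    simp only [smul_eq_mul]
    field_simp
    rw [hD]; ring
  have e2 : ((a₀ - a₁) / D) • (a₁ - b₀) + ((b₀ - b₁) / D) • (a₀ - b₁) = a₁ - b₁ := by
    simp only [smul_eq_mul]
    field_simp
    rw [hD]; ring
  rw [e1] at h1
  rw [e2] at h2
  simp only [smul_eq_mul] at h1 h2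
  have h3 : (a₀ - a₁) / D * (r (a₀ - b₁) + r (a₁ - b₀)) +
      (b₀ - b₁) / D * (r (a₀ - b₁) + r (a₁ - b₀)) = r (a₀ - b₁) + r (a₁ - b₀) := by
    rw [← add_mul, hpq, one_mul]
  linarith

/-- Rearrangement inequality for the cost `r (a - b)` with `r` convex: among all matchings of two
descending sequences, the order-preserving one is cheapest. -/
lemma convex_rearrangement {r : ℝ → ℝ} (hr : ConvexOn ℝ Set.univ r) :
    ∀ (n : ℕ) (a b : Fin n → ℝ), Antitone a → Antitone b → ∀ τ : Equiv.Perm (Fin n),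
      ∑ i, r (a i - b i) ≤ ∑ i, r (a i - b (τ i)) := by
  intro n
  induction n with
  | zero => intro a b _ _ τ; simp
  | succ n ih =>
    intro a b ha hb τ
    obtain ⟨⟨p, e⟩, rfl⟩ := Equiv.Perm.decomposeFin.symm.surjective τ
    have key := ih (fun i => a i.succ) (fun i => b i.succ)
      (fun i j h => ha (Fin.succ_le_succ_iff.mpr h))
      (fun i j h => hb (Fin.succ_le_succ_iff.mpr h)) e
    rw [Fin.sum_univ_succ, Fin.sum_univ_succ]
    simp only [Equiv.Perm.decomposeFin_symm_apply_zero,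
      Equiv.Perm.decomposeFin_symm_apply_succ]
    rcases Fin.eq_zero_or_eq_succ p with rfl | ⟨q, rfl⟩
    · simp only [Equiv.swap_self, Equiv.refl_apply]
      linarith
    · -- The swap only alters the term at `k = e⁻¹ q`, where it undoes the crossing with index `0`.
      obtain ⟨k, rfl⟩ := e.surjective q
      have hoff : ∀ i ∈ Finset.univ.erase k,
          r (a i.succ - b (Equiv.swap 0 (e k).succ (e i).succ)) =
            r (a i.succ - b (e i).succ) := by
        intro i hi
        have hik : i ≠ k := Finset.ne_of_mem_erase hi
        rw [Equiv.swap_apply_of_ne_of_ne (Fin.succ_ne_zero _)]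
        intro h
        exact hik (e.injective (Fin.succ_injective _ h))
      rw [← Finset.add_sum_erase _
        (fun i => r (a i.succ - b (Equiv.swap 0 (e k).succ (e i).succ))) (Finset.mem_univ k),
        Finset.sum_congr rfl hoff]
      rw [← Finset.add_sum_erase _ (fun i => r (a i.succ - b (e i).succ))
        (Finset.mem_univ k)] at key
      rw [Equiv.swap_apply_right]
      have h2 := convex_two_point hr (ha (Fin.zero_le k.succ)) (hb (Fin.zero_le (e k).succ))
      linarith

/-- Reduction to isotonic optimization, sign-invariant case: if `r*` is convex, even and
nondecreasing on `[0, ∞)`, `φ` is even and nondecreasing on `[0, ∞)`, `w` is sorted in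
descending order with nonnegative entries, `σ` sorts `|x|` in descending order, `s = |x|_σ`,
and `v*` minimizes `v ↦ ∑ r*(sᵢ − vᵢ) + ∑ wᵢ φ(vᵢ)` over the nonnegative monotone cone,
then `u*` defined by `u*_{σ(i)} = sign(x_{σ(i)}) v*ᵢ` minimizes
`u ↦ ∑ r*(xᵢ − uᵢ) + ∑ wᵢ φ(u)_[i]` over `ℝⁿ`, with the same minimum value. -/
theorem isotonic_reduction_sign_invariant (n : ℕ) (hn : 1 ≤ n)
    (rstar : ℝ → ℝ) (hrconv : ConvexOn ℝ Set.univ rstar)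
    (hreven : ∀ t : ℝ, rstar (-t) = rstar t)
    (hrmono : ∀ a b : ℝ, 0 ≤ a → a ≤ b → rstar a ≤ rstar b)
    (φ : ℝ → ℝ) (hφeven : ∀ t : ℝ, φ (-t) = φ t)
    (hφmono : ∀ a b : ℝ, 0 ≤ a → a ≤ b → φ a ≤ φ b)
    (w x : Fin n → ℝ) (hw : ∀ i j : Fin n, i ≤ j → w j ≤ w i) (hw0 : ∀ i, 0 ≤ w i)
    (σ : Equiv.Perm (Fin n)) (hσ : ∀ i j : Fin n, i ≤ j → |x (σ j)| ≤ |x (σ i)|)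
    (s : Fin n → ℝ) (hs : ∀ i, s i = |x (σ i)|)
    (vstar : Fin n → ℝ)
    (hvmono : ∀ i j : Fin n, i ≤ j → vstar j ≤ vstar i) (hvpos : ∀ i, 0 ≤ vstar i)
    (hvmin : ∀ v : Fin n → ℝ, (∀ i j : Fin n, i ≤ j → v j ≤ v i) → (∀ i, 0 ≤ v i) →
      (∑ i, rstar (s i - vstar i)) + (∑ i, w i * φ (vstar i)) ≤
        (∑ i, rstar (s i - v i)) + (∑ i, w i * φ (v i)))
    (ustar : Fin n → ℝ) (hustar : ∀ i : Fin n, ustar i = Real.sign (x i) * vstar (σ.symm i)) :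
    (∀ u : Fin n → ℝ,
      (∑ i, rstar (x i - ustar i)) + (∑ i, w i * sortDesc (fun j => φ (ustar j)) i) ≤
        (∑ i, rstar (x i - u i)) + (∑ i, w i * sortDesc (fun j => φ (u j)) i)) ∧
    (∑ i, rstar (x i - ustar i)) + (∑ i, w i * sortDesc (fun j => φ (ustar j)) i) =
      (∑ i, rstar (s i - vstar i)) + (∑ i, w i * φ (vstar i)) := by
  -- `v'` is `v*` with the entries at zeros of `s` set to zero.
  obtain ⟨v', hv'⟩ : ∃ v' : Fin n → ℝ, ∀ i, v' i = if s i = 0 then 0 else vstar i :=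
    ⟨_, fun _ => rfl⟩
  have hs0 : ∀ i, 0 ≤ s i := fun i => hs i ▸ abs_nonneg _
  have hsanti : ∀ i j : Fin n, i ≤ j → s j ≤ s i := by
    intro i j h
    rw [hs, hs]
    exact hσ i j h
  have hv'pos : ∀ i, 0 ≤ v' i := by
    intro i
    rw [hv']
    split_ifs
    exacts [le_rfl, hvpos i]
  have hv'mono : ∀ i j : Fin n, i ≤ j → v' j ≤ v' i := by
    intro i j h
    by_cases hj : s j = 0
    · rw [hv' j, if_pos hj]
      exact hv'pos i
    · have hi : s i ≠ 0 := by
        intro hi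
        exact hj (le_antisymm (hi ▸ hsanti i j h) (hs0 j))
      rw [hv', hv', if_neg hi, if_neg hj]
      exact hvmono i j h
  have hI1 : (∑ i, rstar (s i - v' i)) ≤ ∑ i, rstar (s i - vstar i) := by
    refine Finset.sum_le_sum fun i _ => ?_
    rw [hv']
    split_ifs with h
    · exact even_mono_le hreven hrmono (by simp [h])
    · exact le_rfl
  have hI2 : (∑ i, w i * φ (v' i)) ≤ ∑ i, w i * φ (vstar i) := by
    refine Finset.sum_le_sum fun i _ => mul_le_mul_of_nonneg_left ?_ (hw0 i)
    rw [hv']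
    split_ifs with h
    · exact hφmono _ _ le_rfl (hvpos i)
    · exact le_rfl
  have hI := hvmin v' hv'mono hv'pos
  have huσ : ∀ i, ustar (σ i) = Real.sign (x (σ i)) * v' i := by
    intro i
    rw [hustar, Equiv.symm_apply_apply, hv']
    split_ifs with h
    · rw [hs, abs_eq_zero] at h
      simp [h]
    · rfl
  have hφu : ∀ i, φ (ustar (σ i)) = φ (v' i) := by
    intro i
    rw [huσ]
    rcases lt_trichotomy (x (σ i)) 0 with h | h | h
    · rw [Real.sign_of_neg h, neg_one_mul, hφeven]
    · have : v' i = 0 := by rw [hv', if_pos (by rw [hs, h, abs_zero])]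
      rw [this, mul_zero]
    · rw [Real.sign_of_pos h, one_mul]
  have hJ1 : ∑ i, rstar (x i - ustar i) = ∑ i, rstar (s i - v' i) := by
    rw [← Equiv.sum_comp σ]
    refine Finset.sum_congr rfl fun i _ => ?_
    rw [huσ, hs]
    rcases lt_trichotomy (x (σ i)) 0 with h | h | h
    · rw [Real.sign_of_neg h, abs_of_neg h, ← hreven]
      congr 1
      ring
    · have : v' i = 0 := by rw [hv', if_pos (by rw [hs, h, abs_zero])]
      rw [this, h]
      simp
    · rw [Real.sign_of_pos h, abs_of_pos h, one_mul]
  have hJ2 : ∑ i, w i * sortDesc (fun j => φ (ustar j)) i = ∑ i, w i * φ (v' i) := by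
    refine Finset.sum_congr rfl fun i _ => ?_
    rw [sortDesc_eq_s11 _ σ (fun i j h => ?_), hφu]
    rw [hφu, hφu]
    exact hφmono _ _ (hv'pos j) (hv'mono i j h)
  have hJ : (∑ i, rstar (x i - ustar i)) + (∑ i, w i * sortDesc (fun j => φ (ustar j)) i) =
      (∑ i, rstar (s i - vstar i)) + (∑ i, w i * φ (vstar i)) := by
    rw [hJ1, hJ2]
    linarith
  refine ⟨fun u => ?_, hJ⟩
  rw [hJ]
  -- `T` sorts `|u|` in descending order.
  obtain ⟨T, hT⟩ : ∃ T : Equiv.Perm (Fin n), ∀ i j : Fin n, i ≤ j → |u (T j)| ≤ |u (T i)| :=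
    ⟨Fin.revPerm.trans (Tuple.sort fun i => |u i|), fun i j h =>
      Tuple.monotone_sort (fun i => |u i|) (Fin.rev_le_rev.mpr h)⟩
  refine (hvmin (fun i => |u (T i)|) hT fun i => abs_nonneg _).trans (add_le_add ?_ ?_)
  · calc ∑ i, rstar (s i - |u (T i)|)
        ≤ ∑ i, rstar (s i - |u (T ((σ.trans T.symm) i))|) :=
          convex_rearrangement hrconv n s (fun i => |u (T i)|) (fun i j h => hsanti i j h)
            (fun i j h => hT i j h) _
      _ = ∑ i, rstar (|x (σ i)| - |u (σ i)|) := by simp [hs]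
      _ ≤ ∑ i, rstar (x (σ i) - u (σ i)) :=
          Finset.sum_le_sum fun i _ =>
            even_mono_le hreven hrmono (abs_abs_sub_abs_le_abs_sub _ _)
      _ = ∑ i, rstar (x i - u i) := Equiv.sum_comp σ fun i => rstar (x i - u i)
  · refine le_of_eq (Finset.sum_congr rfl fun i _ => ?_)
    rw [sortDesc_eq_s11 (fun j => φ (u j)) T fun i j h => even_mono_le hφeven hφmono (hT i j h)]
    rcases abs_choice (u (T i)) with h | h <;> simp only [h, hφeven]
end

section
/- Let q > 1, let B be a finite nonempty index set, let (wᵢ)_{i∈B} be real numbers, and for s ∈ ℝ^B define H(γ, s) := Σ_{i∈B} ( (1/q)|sᵢ − γ|^q + wᵢ γ ). For each s, H(·, s) is strictly convex and coercive, so it has a unique minimizer γ*(s) ∈ ℝ. Let s̄ ∈ ℝ^B be such that γ*(s̄) ≠ s̄ⱼ for every j ∈ B. Then γ* is differentiable at s̄ and, for every i ∈ B, ∂γ*/∂sᵢ (s̄) = |γ*(s̄) − s̄ᵢ|^{q−2} / Σ_{j∈B} |γ*(s̄) − s̄ⱼ|^{q−2}. -/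
/-!
The proof has two parts.

* `continuous_of_convex_of_minimizer`: minimizers of a family of convex functions of one real
  variable depend continuously on the parameter, as soon as each value `H γ s` is continuous in `s`.
  Indeed the strict inequalities `H (γ*(s₀)) s₀ < H (γ*(s₀) ± ε) s₀` persist for `s` near `s₀`, and
  by convexity they trap `γ*(s)` in `(γ*(s₀) - ε, γ*(s₀) + ε)`.

* The first-order condition says that `(s, γ*(s))` solves the equation
  `∑ i, (|sᵢ - γ| ^ (q - 2) (sᵢ - γ) - wᵢ) = 0`. At `(s̄, γ*(s̄))` no summand is at its singularity,
  so the left side is strictly differentiable there, with nonzero derivative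
  `-(q - 1) ∑ j, |s̄ⱼ - γ*(s̄)| ^ (q - 2)` in `γ`. By the implicit function theorem the solutions
  near `(s̄, γ*(s̄))` form the graph of a differentiable function, which by continuity of `γ*`
  coincides with `γ*` near `s̄`.
-/

open scoped BigOperators

theorem continuous_of_convex_of_minimizer {E : Type*} [TopologicalSpace E]
    {H : ℝ → E → ℝ} (hcont : ∀ γ, Continuous (H γ))
    (hconv : ∀ s, ConvexOn ℝ Set.univ (fun γ => H γ s)) {g : E → ℝ}
    (hmin : ∀ s γ, γ ≠ g s → H (g s) s < H γ s) : Continuous g := by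
  have hle : ∀ s γ, H (g s) s ≤ H γ s := fun s γ => by
    by_cases h : γ = g s
    · rw [h]
    · exact (hmin s γ h).le
  refine continuous_iff_continuousAt.2 fun s₀ => Metric.tendsto_nhds.2 fun ε hε => ?_
  have h1 : ∀ᶠ s in nhds s₀, H (g s₀) s < H (g s₀ + ε) s :=
    (hcont _).continuousAt.eventually_lt (hcont _).continuousAt (hmin _ _ (by linarith))
  have h2 : ∀ᶠ s in nhds s₀, H (g s₀) s < H (g s₀ - ε) s :=
    (hcont _).continuousAt.eventually_lt (hcont _).continuousAt (hmin _ _ (by linarith))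
  filter_upwards [h1, h2] with s h1 h2
  rw [Real.dist_eq, abs_lt]
  constructor
  · by_contra! h
    have := (hconv s).le_max_of_mem_Icc (x := g s) (y := g s₀) (z := g s₀ - ε)
      (Set.mem_univ _) (Set.mem_univ _) ⟨by linarith, by linarith⟩
    rw [max_eq_right (hle s _)] at this
    linarith
  · by_contra! h
    have := (hconv s).le_max_of_mem_Icc (x := g s₀) (y := g s) (z := g s₀ + ε)
      (Set.mem_univ _) (Set.mem_univ _) ⟨by linarith, by linarith⟩
    rw [max_eq_left (hle s _)] at this
    linarith

theorem convexOn_abs_rpow {q : ℝ} (hq : 1 ≤ q) :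
    ConvexOn ℝ Set.univ (fun x : ℝ => |x| ^ q) := by
  refine ⟨convex_univ, fun x _ y _ a b ha hb hab => ?_⟩
  calc |a • x + b • y| ^ q ≤ (a • |x| + b • |y|) ^ q := by
        refine Real.rpow_le_rpow (abs_nonneg _) ?_ (by linarith)
        simpa [abs_mul, abs_of_nonneg ha, abs_of_nonneg hb] using abs_add_le (a * x) (b * y)
    _ ≤ _ := (convexOn_rpow hq).2 (abs_nonneg x) (abs_nonneg y) ha hb hab

theorem hasStrictDerivAt_abs_rpow_mul_self (p : ℝ) {x : ℝ} (hx : x ≠ 0) :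
    HasStrictDerivAt (fun x : ℝ => |x| ^ p * x) ((p + 1) * |x| ^ p) x := by
  have h := ((Real.hasStrictDerivAt_rpow_const_of_ne (abs_ne_zero.2 hx) p).comp x
    (hasStrictDerivAt_abs hx)).mul (hasStrictDerivAt_id x)
  refine h.congr_deriv ?_
  have e : (SignType.sign x : ℝ) * x = |x| := sign_mul_self x
  have e2 : |x| ^ (p - 1) * |x| = |x| ^ p := by
    rw [← Real.rpow_add_one (abs_ne_zero.2 hx), sub_add_cancel]
  simp only [Function.comp, id]
  linear_combination p * |x| ^ (p - 1) * e + p * e2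

open scoped BigOperators

/-- Differentiation of the PAV pooling subproblem, case `φ(x) = x`:
with `H(γ, s) = ∑_{i ∈ B} ((1/q)|sᵢ − γ|^q + wᵢ γ)` (`q > 1`) and `γ*(s)` its unique
minimizer in `γ`, if `γ*(s̄) ≠ s̄ⱼ` for all `j`, then `γ*` is differentiable at `s̄` with
`∂γ*/∂sᵢ = |γ*(s̄) − s̄ᵢ|^{q−2} / ∑ⱼ |γ*(s̄) − s̄ⱼ|^{q−2}`. -/
theorem pav_subproblem_deriv_id (q : ℝ) (hq : 1 < q)
    (B : Type*) [Fintype B] [Nonempty B] (w : B → ℝ)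
    (H : ℝ → (B → ℝ) → ℝ)
    (hH : ∀ (γ : ℝ) (s : B → ℝ), H γ s = ∑ i, ((1 / q) * |s i - γ| ^ q + w i * γ))
    (gammaStar : (B → ℝ) → ℝ)
    (hmin : ∀ (s : B → ℝ) (γ : ℝ), γ ≠ gammaStar s → H (gammaStar s) s < H γ s)
    (sbar : B → ℝ) (hne : ∀ j : B, gammaStar sbar ≠ sbar j) :
    HasFDerivAt gammaStar
      (∑ i : B, (|gammaStar sbar - sbar i| ^ (q - 2) /
          ∑ j : B, |gammaStar sbar - sbar j| ^ (q - 2)) •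
        (ContinuousLinearMap.proj i : (B → ℝ) →L[ℝ] ℝ)) sbar := by
  set g := gammaStar with hg
  have hconv : ∀ s, ConvexOn ℝ Set.univ (fun γ => H γ s) := by
    intro s
    simp only [hH]
    have hi : ∀ i, ConvexOn ℝ Set.univ (fun γ : ℝ => (1 / q) * |s i - γ| ^ q + w i * γ) := by
      intro i
      have h1 := (convexOn_abs_rpow hq.le).comp_affineMap
        (AffineMap.const ℝ ℝ (s i) - AffineMap.id ℝ ℝ)
      have h2 : ConvexOn ℝ Set.univ (fun γ : ℝ => w i * γ) :=
        (w i • LinearMap.id : ℝ →ₗ[ℝ] ℝ).convexOn convex_univ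
      exact (h1.smul (by positivity : 0 ≤ 1 / q)).add h2
    refine ⟨convex_univ, fun x hx y hy a b ha hb hab => ?_⟩
    simp only [Finset.smul_sum, ← Finset.sum_add_distrib]
    exact Finset.sum_le_sum fun i _ => (hi i).2 hx hy ha hb hab
  have hcont : ∀ γ, Continuous (H γ) := by
    intro γ
    rw [funext (hH γ)]
    refine continuous_finsetSum _ fun i _ => ?_
    exact (continuous_const.mul (((continuous_apply i).sub continuous_const).abs.rpow_const
      fun _ => Or.inr (by linarith))).add continuous_const
  have hgc : Continuous g := continuous_of_convex_of_minimizer hcont hconv hmin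
  -- `f (s, γ) = -∂H/∂γ (γ, s)`
  let f : (B → ℝ) × ℝ → ℝ := fun v => ∑ i, (|v.1 i - v.2| ^ (q - 2) * (v.1 i - v.2) - w i)
  have hf0 : ∀ s, f (s, g s) = 0 := by
    intro s
    have hder : HasDerivAt (fun γ => H γ s) (-f (s, g s)) (g s) := by
      simp only [hH, f, ← Finset.sum_neg_distrib]
      refine HasDerivAt.fun_sum fun i _ => ?_
      have h1 := (hasDerivAt_abs_rpow (s i - g s) hq).comp (g s)
        ((hasDerivAt_id (g s)).const_sub (s i))
      refine ((h1.const_mul (1 / q)).add ((hasDerivAt_id (g s)).const_mul (w i))).congr_deriv ?_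
      have : q ≠ 0 := by linarith
      field_simp
      ring
    have hloc : IsLocalMin (fun γ => H γ s) (g s) := Filter.Eventually.of_forall fun γ => by
      by_cases h : γ = g s
      · rw [h]
      · exact (hmin s γ h).le
    linarith [hloc.hasDerivAt_eq_zero hder]
  let c : B → ℝ := fun i => (q - 1) * |g sbar - sbar i| ^ (q - 2)
  have hpos : ∀ i, 0 < |g sbar - sbar i| ^ (q - 2) := fun i =>
    Real.rpow_pos_of_pos (abs_pos.2 (sub_ne_zero.2 (hne i))) _
  let f' : (B → ℝ) × ℝ →L[ℝ] ℝ := ∑ i, c i •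
    ((ContinuousLinearMap.proj i : (B → ℝ) →L[ℝ] ℝ) ∘L .fst ℝ (B → ℝ) ℝ - .snd ℝ (B → ℝ) ℝ)
  have hf' : HasStrictFDerivAt f f' (sbar, g sbar) := by
    refine HasStrictFDerivAt.fun_sum fun i _ => ?_
    have h1 : HasStrictFDerivAt (fun v : (B → ℝ) × ℝ => v.1 i - v.2)
      ((ContinuousLinearMap.proj i : (B → ℝ) →L[ℝ] ℝ) ∘L .fst ℝ (B → ℝ) ℝ - .snd ℝ (B → ℝ) ℝ)
      (sbar, g sbar) := ContinuousLinearMap.hasStrictFDerivAt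
        ((ContinuousLinearMap.proj i : (B → ℝ) →L[ℝ] ℝ) ∘L .fst ℝ (B → ℝ) ℝ - .snd ℝ (B → ℝ) ℝ)
    have h2 := ((hasStrictDerivAt_abs_rpow_mul_self (q - 2)
      (sub_ne_zero.2 (hne i).symm)).comp_hasStrictFDerivAt (sbar, g sbar) h1).sub_const (w i)
    have hc : c i = (q - 2 + 1) * |sbar i - g sbar| ^ (q - 2) := by
      simp only [c, abs_sub_comm (g sbar)]
      ring
    rw [hc]
    exact h2
  have hS : 0 < ∑ j, |g sbar - sbar j| ^ (q - 2) :=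
    Finset.sum_pos (fun i _ => hpos i) Finset.univ_nonempty
  have hq1 : 0 < q - 1 := by linarith
  have hC : -∑ i, c i ≠ 0 := by
    rw [← Finset.mul_sum]
    exact neg_ne_zero.2 (mul_pos hq1 hS).ne'
  have hinv : (f' ∘L .inr ℝ (B → ℝ) ℝ).IsInvertible := by
    refine ⟨ContinuousLinearEquiv.unitsEquivAut ℝ (Units.mk0 _ hC), ?_⟩
    ext
    simp [f']
  have hψ := hf'.hasStrictFDerivAt_implicitFunctionOfProdDomain hinv
  have hgψ : hf'.implicitFunctionOfProdDomain hinv =ᶠ[nhds sbar] g := by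
    have ht : Filter.Tendsto (fun s => (s, g s)) (nhds sbar) (nhds (sbar, g sbar)) :=
      (continuous_id.prodMk hgc).continuousAt
    filter_upwards [ht.eventually
      (hf'.eventually_apply_eq_iff_implicitFunctionOfProdDomain hinv)] with s hs
    exact hs.1 (by rw [hf0, hf0])
  refine (hψ.hasFDerivAt.congr_of_eventuallyEq hgψ.symm).congr_fderiv ?_
  ext v
  -- apply the invertible partial derivative in `γ` to both sides
  apply hinv.injective
  have hA : ∀ x, (f' ∘L .inr ℝ (B → ℝ) ℝ) x = -(∑ i, c i) * x := fun x => by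
    simp [f', Finset.sum_mul]
  have hI : ∀ y, (f' ∘L .inr ℝ (B → ℝ) ℝ) ((f' ∘L .inr ℝ (B → ℝ) ℝ).inverse y) = y :=
    fun y => hinv.self_apply_inverse y
  have hL : (f' ∘L .inl ℝ (B → ℝ) ℝ) v = ∑ i, c i * v i := by
    simp [f']
  have hN : (-(f' ∘L .inr ℝ (B → ℝ) ℝ).inverse ∘L (f' ∘L .inl ℝ (B → ℝ) ℝ)) v =
      -(f' ∘L .inr ℝ (B → ℝ) ℝ).inverse ((f' ∘L .inl ℝ (B → ℝ) ℝ) v) := rfl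
  rw [hN, map_neg, hI, hL, hA]
  simp only [sum_apply, smul_apply, ContinuousLinearMap.proj_apply, smul_eq_mul, c,
    ← Finset.mul_sum, mul_assoc, div_mul_eq_mul_div, ← Finset.sum_div]
  field_simp
end

section
/- Let n ≥ 1 and 1 ≤ k ≤ n. Define g : ℝⁿ → ℝ by g(x) := max_{y ∈ P(1_k)} ⟨(x₁²/2, …, xₙ²/2), y⟩, which equals half the sum of the k largest values among x₁², …, xₙ². Let x ∈ ℝⁿ have pairwise distinct absolute values |x₁|, …, |xₙ|. Then g is differentiable at x and its gradient is the top-k-in-magnitude vector: (∇g(x))ᵢ = xᵢ if |xᵢ| is among the k largest absolute values of the coordinates of x, and (∇g(x))ᵢ = 0 otherwise. -/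
/-- The number of coordinates at least as large as the `i`-th in absolute value (the largest
coordinate has rank `1`). -/
noncomputable def absRank {n : ℕ} (x : Fin n → ℝ) (i : Fin n) : ℕ :=
  (Finset.univ.filter fun j => |x i| ≤ |x j|).card

lemma absRank_lt {n : ℕ} {x : Fin n → ℝ} {i j : Fin n} (h : |x i| < |x j|) :
    absRank x j < absRank x i := by
  apply Finset.card_lt_card
  rw [Finset.ssubset_iff_of_subset]
  · exact ⟨i, by simp, by simpa using h⟩
  · intro l hl
    simp only [Finset.mem_filter, Finset.mem_univ, true_and] at hl ⊢
    exact h.le.trans hl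

/-- For distinct absolute values, the zero-based rank is a permutation of the indices. -/
lemma exists_rank_perm {n : ℕ} {x : Fin n → ℝ} (hx : ∀ i j : Fin n, i ≠ j → |x i| ≠ |x j|) :
    ∃ σ : Equiv.Perm (Fin n), ∀ i, (σ i : ℕ) + 1 = absRank x i := by
  have hpos : ∀ i, 1 ≤ absRank x i := fun i => Finset.card_pos.mpr ⟨i, by simp⟩
  have hle : ∀ i, absRank x i ≤ n := fun i => (Finset.card_le_univ _).trans (by simp)
  have hinj : Function.Injective
      (fun i => (⟨absRank x i - 1, by have := hpos i; have := hle i; omega⟩ : Fin n)) := by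
    intro i j hij
    by_contra hne
    have h1 := hpos i
    have h2 := hpos j
    have h3 := congrArg Fin.val hij
    simp only at h3
    rcases lt_or_gt_of_ne (hx i j hne) with h | h
    · have := absRank_lt h; omega
    · have := absRank_lt h; omega
  refine ⟨Equiv.ofBijective _ (Finite.injective_iff_bijective.mp hinj), fun i => ?_⟩
  have := hpos i
  simp only [Equiv.ofBijective_apply]
  omega

/-- The defining inequalities and equation of the hypersimplex hold on `P(1_k)`. -/
lemma permutahedron_onek_subset {n k : ℕ} {y : Fin n → ℝ} (hy : y ∈ permutahedron n (onek n k)) :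
    (∀ i, 0 ≤ y i ∧ y i ≤ 1) ∧ ∑ i, y i = ∑ i, onek n k i := by
  have hconv : Convex ℝ {y : Fin n → ℝ |
      (∀ i, 0 ≤ y i ∧ y i ≤ 1) ∧ ∑ i, y i = ∑ i, onek n k i} := by
    rintro y ⟨hy, hys⟩ z ⟨hz, hzs⟩ a b ha hb hab
    refine ⟨fun i => ?_, ?_⟩
    · obtain ⟨h1, h2⟩ := hy i
      obtain ⟨h3, h4⟩ := hz i
      simp only [Pi.add_apply, Pi.smul_apply, smul_eq_mul]
      constructor
      · positivity
      · nlinarith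
    · simp only [Pi.add_apply, Pi.smul_apply, smul_eq_mul, Finset.sum_add_distrib,
        ← Finset.mul_sum, hys, hzs]
      rw [← add_mul, hab, one_mul]
  refine convexHull_min ?_ hconv hy
  rintro _ ⟨σ, rfl⟩
  refine ⟨fun i => ?_, Equiv.sum_comp σ (onek n k)⟩
  simp only [onek]
  split_ifs <;> norm_num

/-- A vertex of `P(1_k)` supported on the largest entries of `c` maximises `⟨c, ·⟩`. -/
lemma isGreatest_topk {n k : ℕ} (hn : 1 ≤ n) (hk : 1 ≤ k) (σ : Equiv.Perm (Fin n))
    (c : Fin n → ℝ) (hc : ∀ i j, (σ i : ℕ) < k → ¬ (σ j : ℕ) < k → c j ≤ c i) :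
    IsGreatest {v : ℝ | ∃ y ∈ permutahedron n (onek n k), v = ∑ i, c i * y i}
      (∑ i, c i * onek n k (σ i)) := by
  refine ⟨⟨_, subset_convexHull ℝ _ ⟨σ, rfl⟩, rfl⟩, ?_⟩
  rintro _ ⟨y, hy, rfl⟩
  obtain ⟨hbd, hsum⟩ := permutahedron_onek_subset hy
  -- The threshold is the smallest entry of `c` on the support of the vertex.
  obtain ⟨m, hm, hmin⟩ := (Finset.univ.filter fun i => (σ i : ℕ) < k).exists_min_image c
    ⟨σ.symm ⟨0, hn⟩, by simpa using Nat.lt_of_succ_le hk⟩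
  simp only [Finset.mem_filter, Finset.mem_univ, true_and] at hm hmin
  have hnn : 0 ≤ ∑ i, (c i - c m) * (onek n k (σ i) - y i) := by
    refine Finset.sum_nonneg fun i _ => ?_
    obtain ⟨h0, h1⟩ := hbd i
    by_cases hi : (σ i : ℕ) < k
    · simp only [onek, hi, if_true]
      exact mul_nonneg (sub_nonneg.mpr (hmin i hi)) (sub_nonneg.mpr h1)
    · simp only [onek, hi, if_false]
      exact mul_nonneg_of_nonpos_of_nonpos (sub_nonpos.mpr (hc m i hm hi)) (by linarith)
  have hσ : ∑ i, onek n k (σ i) = ∑ i, onek n k i := Equiv.sum_comp σ (onek n k)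
  have hexp : ∑ i, (c i - c m) * (onek n k (σ i) - y i)
      = (∑ i, c i * onek n k (σ i) - ∑ i, c i * y i)
        - c m * (∑ i, onek n k (σ i) - ∑ i, y i) := by
    simp only [mul_sub, Finset.mul_sum, ← Finset.sum_sub_distrib]
    exact Finset.sum_congr rfl fun i _ => by ring
  rw [hσ, hsum, sub_self, mul_zero, sub_zero] at hexp
  linarith

/-- Let `g(x) = max_{y ∈ P(1_k)} ⟨(x₁²/2, …, xₙ²/2), y⟩`. At a point `x` whose coordinates
have pairwise distinct absolute values, `g` is differentiable and its gradient is the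
top-k-in-magnitude vector. -/
theorem grad_topk_in_magnitude (n k : ℕ) (hn : 1 ≤ n) (hk1 : 1 ≤ k) (hkn : k ≤ n)
    (x : Fin n → ℝ) (hx : ∀ i j : Fin n, i ≠ j → |x i| ≠ |x j|) :
    HasFDerivAt
      (fun z : Fin n → ℝ =>
        sSup {v : ℝ | ∃ y ∈ permutahedron n (onek n k), v = ∑ i, (z i ^ 2 / 2) * y i})
      (∑ i : Fin n,
        (if (Finset.univ.filter fun j => |x i| ≤ |x j|).card ≤ k then x i else 0) •
          (ContinuousLinearMap.proj i : (Fin n → ℝ) →L[ℝ] ℝ)) x := by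
  obtain ⟨σ, hσ⟩ := exists_rank_perm hx
  have hev : ∀ᶠ z : Fin n → ℝ in nhds x, ∀ i j, |x j| < |x i| → |z j| < |z i| := by
    simp only [Filter.eventually_all]
    intro i j hij
    exact ((continuous_apply j).abs.continuousAt).eventually_lt
      ((continuous_apply i).abs.continuousAt) hij
  have hloc : (fun z : Fin n → ℝ =>
        sSup {v : ℝ | ∃ y ∈ permutahedron n (onek n k), v = ∑ i, (z i ^ 2 / 2) * y i})
      =ᶠ[nhds x] fun z => ∑ i, (z i ^ 2 / 2) * onek n k (σ i) := by
    filter_upwards [hev] with z hz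
    refine (isGreatest_topk hn hk1 σ (fun i => z i ^ 2 / 2) fun i j hi hj => ?_).csSup_eq
    have hxij : |x j| < |x i| := by
      have hne : i ≠ j := by rintro rfl; exact hj hi
      refine lt_of_le_of_ne (not_lt.mp fun h => ?_) (hx j i hne.symm)
      have := absRank_lt h
      have := hσ i
      have := hσ j
      omega
    have := sq_lt_sq.mpr (hz i j hxij)
    linarith
  refine HasFDerivAt.congr_of_eventuallyEq ?_ hloc
  refine HasFDerivAt.fun_sum fun i _ => ?_
  have hp : HasFDerivAt (fun z : Fin n → ℝ => z i)
      (ContinuousLinearMap.proj i : (Fin n → ℝ) →L[ℝ] ℝ) x := hasFDerivAt_apply i x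
  have hd := (((hasDerivAt_pow 2 (x i)).div_const 2).mul_const
    (onek n k (σ i))).comp_hasFDerivAt x hp
  have hr : (Finset.univ.filter fun j => |x i| ≤ |x j|).card = (σ i : ℕ) + 1 := (hσ i).symm
  have hcoef : (if (Finset.univ.filter fun j => |x i| ≤ |x j|).card ≤ k then x i else 0)
      = ((2 : ℕ) : ℝ) * x i ^ (2 - 1) / 2 * onek n k (σ i) := by
    simp only [hr, onek, Nat.succ_le_iff]
    split_ifs <;> simp
  rw [hcoef]
  exact hd
end

section
/- Let n ≥ 1, 1 ≤ k ≤ n, and x ∈ ℝⁿ. For each λ > 0, let y*(λ) be the unique maximizer over the permutahedron P(1_k) of the strictly concave function y ↦ ⟨y, x⟩ − (λ/2)‖y‖₂². Then y*(λ) converges to (k/n)·(1,1,…,1) ∈ ℝⁿ as λ → ∞. -/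
theorem sum_onek (n k : ℕ) (hkn : k ≤ n) : ∑ i, onek n k i = k := by
  simp only [onek, Finset.sum_boole, Nat.cast_inj]
  rw [Fin.card_filter_val_lt]
  omega

theorem permutahedron_onek_bounds (n k : ℕ) (hkn : k ≤ n) {y : Fin n → ℝ}
    (hy : y ∈ permutahedron n (onek n k)) :
    (∀ i, 0 ≤ y i ∧ y i ≤ 1) ∧ ∑ i, y i = k := by
  have hconv : Convex ℝ {y : Fin n → ℝ | (∀ i, 0 ≤ y i ∧ y i ≤ 1) ∧ ∑ i, y i = k} := by
    rintro u ⟨hu, hus⟩ v ⟨hv, hvs⟩ a b ha hb hab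
    refine ⟨fun i => ?_, ?_⟩
    · simpa using (convex_Icc (0 : ℝ) 1) (hu i) (hv i) ha hb hab
    · simp only [Pi.add_apply, Pi.smul_apply, smul_eq_mul, Finset.sum_add_distrib,
        ← Finset.mul_sum, hus, hvs]
      rw [← add_mul, hab, one_mul]
  refine convexHull_min ?_ hconv hy
  rintro _ ⟨σ, rfl⟩
  refine ⟨fun i => ?_, ?_⟩
  · simp only [onek]
    split_ifs <;> norm_num
  · rw [Equiv.sum_comp σ (onek n k), sum_onek n k hkn]

theorem const_mem_permutahedron (n k : ℕ) (hn : 1 ≤ n) (hkn : k ≤ n) :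
    (fun _ => (k : ℝ) / n) ∈ permutahedron n (onek n k) := by
  have : NeZero n := ⟨by omega⟩
  have hn0 : (n : ℝ) ≠ 0 := by exact_mod_cast (by omega : n ≠ 0)
  have h := (convex_convexHull ℝ
    {y : Fin n → ℝ | ∃ σ : Equiv.Perm (Fin n), y = fun i => onek n k (σ i)}).sum_mem
    (t := Finset.univ) (w := fun _ : Fin n => (1 : ℝ) / n)
    (z := fun j i => onek n k (i + j)) (fun _ _ => by positivity)
    (by simp [hn0]) (fun j _ => subset_convexHull ℝ _ ⟨Equiv.addRight j, rfl⟩)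
  unfold permutahedron
  convert h using 1
  funext i
  have hs : ∑ j : Fin n, onek n k (i + j) = k :=
    (Equiv.sum_comp (Equiv.addLeft i) (onek n k)).trans (sum_onek n k hkn)
  simp only [Finset.sum_apply, Pi.smul_apply, smul_eq_mul, ← Finset.mul_sum, hs]
  ring

/-- As `λ → ∞`, the unique maximizer over `P(1_k)` of `y ↦ ⟨y, x⟩ − (λ/2)‖y‖²`
converges to `(k/n)·(1, …, 1)`. -/
theorem relaxed_topkmask_limit (n k : ℕ) (hn : 1 ≤ n) (hk1 : 1 ≤ k) (hkn : k ≤ n)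
    (x : Fin n → ℝ) (ystar : ℝ → Fin n → ℝ)
    (hystar : ∀ lam : ℝ, 0 < lam →
      ystar lam ∈ permutahedron n (onek n k) ∧
      ∀ y ∈ permutahedron n (onek n k), y ≠ ystar lam →
        (∑ i, y i * x i) - lam / 2 * (∑ i, (y i) ^ 2) <
          (∑ i, ystar lam i * x i) - lam / 2 * (∑ i, (ystar lam i) ^ 2)) :
    Filter.Tendsto ystar Filter.atTop (nhds fun _ => (k : ℝ) / n) := by
  have hn0 : (n : ℝ) ≠ 0 := by exact_mod_cast (by omega : n ≠ 0)
  have hcmem := const_mem_permutahedron n k hn hkn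
  have hcb := (permutahedron_onek_bounds n k hkn hcmem).1
  set c : ℝ := (k : ℝ) / n with hc
  have hkc : (k : ℝ) = n * c := by rw [hc]; field_simp
  rw [tendsto_pi_nhds]
  intro i
  have key : ∀ lam : ℝ, 0 < lam →
      dist (ystar lam i) c ≤ Real.sqrt (2 * (∑ j, |x j|) / lam) := by
    intro lam hl
    obtain ⟨hmem, hmax⟩ := hystar lam hl
    obtain ⟨hb, hs⟩ := permutahedron_onek_bounds n k hkn hmem
    have hle : (∑ j, c * x j) - lam / 2 * (∑ _j : Fin n, c ^ 2) ≤
        (∑ j, ystar lam j * x j) - lam / 2 * (∑ j, (ystar lam j) ^ 2) := by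
      by_cases h : (fun _ => c) = ystar lam
      · rw [← h]
      · exact (hmax _ hcmem h).le
    have hlin : (∑ j, ystar lam j * x j) - ∑ j, c * x j ≤ ∑ j, |x j| := by
      rw [← Finset.sum_sub_distrib]
      refine Finset.sum_le_sum fun j _ => ?_
      rw [← sub_mul]
      refine (le_abs_self _).trans ?_
      rw [abs_mul]
      refine mul_le_of_le_one_left (abs_nonneg _) ?_
      rw [abs_le]
      have := hb j
      have := hcb j
      constructor <;> linarith
    have hsq : ∑ j, (ystar lam j - c) ^ 2 =
        (∑ j, (ystar lam j) ^ 2) - ∑ _j : Fin n, c ^ 2 := by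
      simp only [sub_sq, Finset.sum_add_distrib, Finset.sum_sub_distrib, ← Finset.sum_mul,
        ← Finset.mul_sum, hs, hkc]
      simp only [Finset.sum_const, Finset.card_univ, Fintype.card_fin, nsmul_eq_mul]
      ring
    have hi : (ystar lam i - c) ^ 2 ≤ ∑ j, (ystar lam j - c) ^ 2 :=
      Finset.single_le_sum (f := fun j => (ystar lam j - c) ^ 2)
        (fun j _ => sq_nonneg _) (Finset.mem_univ i)
    rw [Real.dist_eq]
    apply Real.abs_le_sqrt
    rw [le_div_iff₀ hl]
    nlinarith [mul_le_mul_of_nonneg_right hi hl.le]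
  have hlim : Filter.Tendsto (fun lam : ℝ => Real.sqrt (2 * (∑ j, |x j|) / lam))
      Filter.atTop (nhds 0) := by
    have h := (Real.continuous_sqrt.tendsto 0).comp
      (tendsto_const_nhds.div_atTop Filter.tendsto_id :
        Filter.Tendsto (fun lam : ℝ => 2 * (∑ j, |x j|) / lam) Filter.atTop (nhds 0))
    simpa [Function.comp_def] using h
  rw [tendsto_iff_dist_tendsto_zero]
  refine squeeze_zero' (Filter.Eventually.of_forall fun _ => dist_nonneg) ?_ hlim
  filter_upwards [Filter.eventually_gt_atTop 0] with lam hl using key lam hl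
end
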